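/- arXiv:1303.1090 — 7 statements merged into one kernel-verified Lean document; each statement's English description precedes it below -/
import Mathlib

section
/- Let f* be the optimal value of the problem of minimizing f(z) over z ∈ Q subject to g_j(z) ≤ 0 for j = 1,…,r. Assume an optimal solution z* exists with f(z*) = f*, and that μ* ∈ ℝ^r with μ* ≥ 0 is an optimal Lagrange multiplier vector, i.e. strong duality holds in the form f* = inf_{z ∈ Q} ( f(z) + Σ_{j=1}^r μ*_j g_j(z) ). If σ₁ ≥ ‖μ*‖_∞ and σ₂ ≥ 0, then f* equals the optimal value of the penalized problem: minimize f(z) + Σ_{j=1}^r ( σ₁·δ_j + σ₂·δ_j² ) over z ∈ Q and δ ∈ ℝ^r subject to g_j(z) ≤ δ_j and δ_j ≥ 0 for j = 1,…,r. -/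
/-- Exact penalty, part i.  Let `fstar` be the optimal value of
`min f(z) s.t. z ∈ Q, g_j(z) ≤ 0`, attained at `zstar`, and let `μ ≥ 0` be an optimal
Lagrange multiplier vector, i.e. `fstar = inf_{z ∈ Q} (f(z) + Σ_j μ_j g_j(z))`
(strong duality).  If `σ₁ ≥ ‖μ‖_∞` and `σ₂ ≥ 0`, then `fstar` equals the optimal value
(attained) of the penalized problem
`min_{z ∈ Q, δ ≥ 0, g_j(z) ≤ δ_j} f(z) + Σ_j (σ₁ δ_j + σ₂ δ_j²)`.
Here `‖μ‖` is the sup-norm, since `Fin r → ℝ` carries the `Pi` (sup) norm. -/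
theorem exact_penalty_value {n r : ℕ}
    (f : (Fin n → ℝ) → ℝ) (g : Fin r → (Fin n → ℝ) → ℝ) (Q : Set (Fin n → ℝ))
    (hQclosed : IsClosed Q) (hQconvex : Convex ℝ Q)
    (hf : ConvexOn ℝ Set.univ f) (hg : ∀ j, ConvexOn ℝ Set.univ (g j))
    (fstar : ℝ) (zstar : Fin n → ℝ) (μ : Fin r → ℝ) (hμ : ∀ j, 0 ≤ μ j)
    (hzQ : zstar ∈ Q) (hzfeas : ∀ j, g j zstar ≤ 0) (hzval : f zstar = fstar)
    (hopt : ∀ z ∈ Q, (∀ j, g j z ≤ 0) → fstar ≤ f z)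
    (hdual : IsGLB ((fun z => f z + ∑ j, μ j * g j z) '' Q) fstar)
    (σ1 σ2 : ℝ) (hσ1 : ‖μ‖ ≤ σ1) (hσ2 : 0 ≤ σ2) :
    IsLeast {v : ℝ | ∃ z ∈ Q, ∃ δ : Fin r → ℝ,
        (∀ j, g j z ≤ δ j) ∧ (∀ j, 0 ≤ δ j) ∧
        v = f z + ∑ j, (σ1 * δ j + σ2 * (δ j) ^ 2)} fstar := by
  refine ⟨⟨zstar, hzQ, fun _ => 0, hzfeas, fun _ => le_rfl, by simp [hzval]⟩, ?_⟩
  rintro v ⟨z, hz, δ, hgδ, hδ, rfl⟩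
  have h1 : fstar ≤ f z + ∑ j, μ j * g j z := hdual.1 ⟨z, hz, rfl⟩
  have h2 : ∑ j, μ j * g j z ≤ ∑ j, (σ1 * δ j + σ2 * (δ j) ^ 2) := by
    refine Finset.sum_le_sum fun j _ => ?_
    have h3 : μ j ≤ σ1 := (le_abs_self _).trans ((norm_le_pi_norm μ j).trans hσ1)
    have h4 := mul_le_mul_of_nonneg_left (hgδ j) (hμ j)
    have h5 := mul_le_mul_of_nonneg_right h3 (hδ j)
    have h6 : 0 ≤ σ2 * (δ j) ^ 2 := mul_nonneg hσ2 (sq_nonneg _)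
    linarith
  linarith
end

section
/- Let f* be the optimal value of the problem of minimizing f(z) over z ∈ Q subject to g_j(z) ≤ 0 for j = 1,…,r. Assume an optimal solution z* exists with f(z*) = f*, and that μ* ∈ ℝ^r with μ* ≥ 0 is an optimal Lagrange multiplier vector, i.e. strong duality holds in the form f* = inf_{z ∈ Q} ( f(z) + Σ_{j=1}^r μ*_j g_j(z) ). If σ₁ > ‖μ*‖_∞ and σ₂ ≥ 0, then the set of minimizers of the penalized problem — minimize f(z) + Σ_{j=1}^r ( σ₁·δ_j + σ₂·δ_j² ) over z ∈ Q, δ ∈ ℝ^r subject to g_j(z) ≤ δ_j, δ_j ≥ 0 — coincides with the set of minimizers of the original problem, in the sense that (z, δ) is optimal for the penalized problem if and only if z is optimal for the original problem and δ = 0. -/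
/-- Exact penalty, part ii.  Under the same assumptions as part i but with
the strict inequality `σ₁ > ‖μ‖_∞`, the minimizers of the penalized problem are exactly the
pairs `(z, δ)` with `z` a minimizer of the original problem and `δ = 0`.
Here `‖μ‖` is the sup-norm, since `Fin r → ℝ` carries the `Pi` (sup) norm. -/
theorem exact_penalty_minimizers {n r : ℕ}
    (f : (Fin n → ℝ) → ℝ) (g : Fin r → (Fin n → ℝ) → ℝ) (Q : Set (Fin n → ℝ))
    (hQclosed : IsClosed Q) (hQconvex : Convex ℝ Q)
    (hf : ConvexOn ℝ Set.univ f) (hg : ∀ j, ConvexOn ℝ Set.univ (g j))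
    (fstar : ℝ) (zstar : Fin n → ℝ) (μ : Fin r → ℝ) (hμ : ∀ j, 0 ≤ μ j)
    (hzQ : zstar ∈ Q) (hzfeas : ∀ j, g j zstar ≤ 0) (hzval : f zstar = fstar)
    (hopt : ∀ z ∈ Q, (∀ j, g j z ≤ 0) → fstar ≤ f z)
    (hdual : IsGLB ((fun z => f z + ∑ j, μ j * g j z) '' Q) fstar)
    (σ1 σ2 : ℝ) (hσ1 : ‖μ‖ < σ1) (hσ2 : 0 ≤ σ2) :
    ∀ (z : Fin n → ℝ) (δ : Fin r → ℝ),
      (z ∈ Q ∧ (∀ j, g j z ≤ δ j) ∧ (∀ j, 0 ≤ δ j) ∧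
        ∀ z' ∈ Q, ∀ δ' : Fin r → ℝ, (∀ j, g j z' ≤ δ' j) → (∀ j, 0 ≤ δ' j) →
          f z + ∑ j, (σ1 * δ j + σ2 * (δ j) ^ 2) ≤
            f z' + ∑ j, (σ1 * δ' j + σ2 * (δ' j) ^ 2))
      ↔ (z ∈ Q ∧ (∀ j, g j z ≤ 0) ∧
          (∀ z' ∈ Q, (∀ j, g j z' ≤ 0) → f z ≤ f z') ∧ δ = 0) := by
  have hlt : ∀ j, μ j < σ1 := fun j =>
    lt_of_le_of_lt (le_trans (le_abs_self _) (norm_le_pi_norm μ j)) hσ1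
  have key : ∀ z ∈ Q, ∀ δ : Fin r → ℝ, (∀ j, g j z ≤ δ j) → (∀ j, 0 ≤ δ j) →
      fstar + ∑ j, (σ1 - μ j) * δ j ≤ f z + ∑ j, (σ1 * δ j + σ2 * (δ j) ^ 2) := by
    intro z hz δ h1 h2
    have h3 : fstar ≤ f z + ∑ j, μ j * g j z := hdual.1 ⟨z, hz, rfl⟩
    have h4 : ∑ j, μ j * g j z + ∑ j, (σ1 - μ j) * δ j
        ≤ ∑ j, (σ1 * δ j + σ2 * (δ j) ^ 2) := by
      rw [← Finset.sum_add_distrib]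
      refine Finset.sum_le_sum fun j _ => ?_
      have h5 := mul_le_mul_of_nonneg_left (h1 j) (hμ j)
      have h6 := mul_nonneg hσ2 (sq_nonneg (δ j))
      linarith
    linarith
  have hnn : ∀ δ : Fin r → ℝ, (∀ j, 0 ≤ δ j) → ∀ j ∈ Finset.univ, 0 ≤ (σ1 - μ j) * δ j :=
    fun δ h j _ => mul_nonneg (sub_pos.2 (hlt j)).le (h j)
  intro z δ
  constructor
  · rintro ⟨hz, h1, h2, h3⟩
    have h4 := h3 zstar hzQ 0 hzfeas (fun _ => le_rfl)
    have h5 := key z hz δ h1 h2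
    have h0 : f zstar + ∑ j, (σ1 * (0 : Fin r → ℝ) j + σ2 * ((0 : Fin r → ℝ) j) ^ 2)
        = fstar := by simp [hzval]
    rw [h0] at h4
    have h6 : ∑ j, (σ1 - μ j) * δ j = 0 :=
      le_antisymm (by linarith) (Finset.sum_nonneg (hnn δ h2))
    have hδ : δ = 0 := by
      funext j
      have h7 := (Finset.sum_eq_zero_iff_of_nonneg (hnn δ h2)).1 h6 j (Finset.mem_univ j)
      exact (mul_eq_zero.1 h7).resolve_left (sub_pos.2 (hlt j)).ne'
    subst hδ
    refine ⟨hz, h1, fun z' hz' hg' => ?_, rfl⟩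
    have h8 := hopt z' hz' hg'
    simp at h4
    linarith
  · rintro ⟨hz, h1, h2, rfl⟩
    refine ⟨hz, h1, fun _ => le_rfl, fun z' hz' δ' h3 h4 => ?_⟩
    have h5 := key z' hz' δ' h3 h4
    have h6 := Finset.sum_nonneg (hnn δ' h4)
    have h7 := h2 zstar hzQ hzfeas
    have h0 : f z + ∑ j, (σ1 * (0 : Fin r → ℝ) j + σ2 * ((0 : Fin r → ℝ) j) ^ 2)
        = f z := by simp
    rw [h0]
    linarith
end

section
/- Let C be a real symmetric positive definite n×n matrix whose maximum eigenvalue is less than or equal to one, and let γ ∈ [0,1]. Then the 2n×2n block matrix M = [[(1+γ)(I−C), −γ(I−C)], [I, 0]] is Schur stable, i.e. its spectral radius ρ(M) is strictly less than one. -/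
lemma scalar_aux (β γ : ℝ) (μ : ℂ) (h0 : 0 ≤ β) (h1 : β < 1) (g0 : 0 ≤ γ) (g1 : γ ≤ 1)
    (h : μ ^ 2 = ((1 + γ) * μ - γ) * β) : ‖μ‖ < 1 := by
  obtain ⟨a, b⟩ := μ
  have hr := congrArg Complex.re h
  have hi := congrArg Complex.im h
  simp [pow_two] at hr hi
  suffices hs : a * a + b * b < 1 by
    have h2 : ‖(⟨a, b⟩ : ℂ)‖ ^ 2 < 1 := by
      rw [Complex.sq_norm, Complex.normSq_mk]; exact hs
    nlinarith [norm_nonneg (⟨a, b⟩ : ℂ)]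
  by_cases hb : b = 0
  · subst hb
    have ha1 : a < 1 := by
      by_contra hc
      push Not at hc
      have : 0 < (1 + γ) * a - γ := by nlinarith
      nlinarith
    have ha2 : -1 < a := by
      by_contra hc
      push Not at hc
      have : (1 + γ) * a - γ < 0 := by nlinarith
      nlinarith
    nlinarith
  · have h2 : 2 * a = (1 + γ) * β := by
      apply mul_right_cancel₀ hb
      linarith
    have h3 : a * a + b * b = β * γ := by
      have : 2 * a * a = (1 + γ) * β * a := by rw [h2]
      nlinarith
    nlinarith

lemma real_eig {n : ℕ} (C : Matrix (Fin n) (Fin n) ℝ)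
    (hC : C.PosDef) (hCeig : ∀ lam ∈ spectrum ℝ C, lam ≤ 1) (z : ℂ)
    (hz : z ∈ spectrum ℂ (C.map Complex.ofReal)) : ∃ r : ℝ, z = r ∧ 0 < r ∧ r ≤ 1 := by
  rw [Matrix.mem_spectrum_iff_isRoot_charpoly] at hz
  have e : (C.map Complex.ofReal).charpoly = C.charpoly.map Complex.ofRealHom :=
    Matrix.charpoly_map C Complex.ofRealHom
  rw [e, hC.isHermitian.charpoly_eq, Polynomial.IsRoot, Polynomial.eval_map, Polynomial.eval₂_finsetProd,
    Finset.prod_eq_zero_iff] at hz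
  obtain ⟨i, -, hi⟩ := hz
  refine ⟨hC.isHermitian.eigenvalues i, ?_, hC.eigenvalues_pos i,
    hCeig _ (hC.isHermitian.eigenvalues_mem_spectrum_real i)⟩
  simpa [sub_eq_zero] using hi

/-- For a real symmetric positive definite `n×n` matrix `C` with all
eigenvalues at most one, and `γ ∈ [0,1]`, the block matrix
`M = [[(1+γ)(I−C), −γ(I−C)], [I, 0]]` is Schur stable: every complex eigenvalue of `M`
(element of the complex spectrum of `M` viewed over `ℂ`) has modulus strictly less
than one. -/
theorem fgm_error_matrix_schur_stable {n : ℕ} (C : Matrix (Fin n) (Fin n) ℝ)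
    (hC : C.PosDef) (hCeig : ∀ lam ∈ spectrum ℝ C, lam ≤ 1)
    (γ : ℝ) (hγ : γ ∈ Set.Icc (0 : ℝ) 1) :
    ∀ μ ∈ spectrum ℂ
      ((Matrix.fromBlocks
          ((1 + γ) • ((1 : Matrix (Fin n) (Fin n) ℝ) - C))
          ((-γ) • ((1 : Matrix (Fin n) (Fin n) ℝ) - C))
          (1 : Matrix (Fin n) (Fin n) ℝ)
          (0 : Matrix (Fin n) (Fin n) ℝ)).map Complex.ofReal),
      ‖μ‖ < 1 := by
  intro μ hμ
  rw [← Matrix.spectrum_toLin', ← Module.End.hasEigenvalue_iff_mem_spectrum] at hμ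
  obtain ⟨w, hw⟩ := hμ.exists_hasEigenvector
  have hw0 := hw.2
  have hw1 := hw.apply_eq_smul
  obtain ⟨x, y, rfl⟩ : ∃ x y, w = Sum.elim x y := ⟨w ∘ Sum.inl, w ∘ Sum.inr, by simp⟩
  set K := C.map Complex.ofReal with hK
  have e1 : ((1 + γ) • ((1 : Matrix (Fin n) (Fin n) ℝ) - C)).map Complex.ofReal
      = (1 + γ : ℂ) • (1 - K) := by
    ext i j; simp [hK, Matrix.one_apply]; split_ifs <;> simp
  have e2 : ((-γ) • ((1 : Matrix (Fin n) (Fin n) ℝ) - C)).map Complex.ofReal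
      = (-γ : ℂ) • (1 - K) := by
    ext i j; simp [hK, Matrix.one_apply]; split_ifs <;> simp
  have e3 : (1 : Matrix (Fin n) (Fin n) ℝ).map Complex.ofReal = 1 := by
    ext i j; simp [Matrix.one_apply]; split_ifs <;> simp
  have e4 : (0 : Matrix (Fin n) (Fin n) ℝ).map Complex.ofReal = 0 := by
    ext i j; simp
  rw [Matrix.toLin'_apply, Matrix.fromBlocks_map, e1, e2, e3, e4, Matrix.fromBlocks_mulVec] at hw1
  have hx : x = μ • y := by
    funext i
    simpa using congrFun hw1 (Sum.inr i)
  subst hx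
  have hy0 : y ≠ 0 := by
    rintro rfl
    apply hw0
    funext i; cases i <;> simp
  have hy : ((1 + γ) * μ - γ) • (y - K.mulVec y) = μ ^ 2 • y := by
    funext i
    have := congrFun hw1 (Sum.inl i)
    rw [Matrix.smul_mulVec, Matrix.smul_mulVec] at this
    simp [Matrix.sub_mulVec, Matrix.mulVec_smul] at this
    simp
    linear_combination this
  by_cases hc : (1 + γ) * μ - γ = 0
  · rw [hc, zero_smul] at hy
    have := (smul_eq_zero.mp hy.symm).resolve_right hy0
    have : μ = 0 := by simpa using this
    simp [this]
  · obtain ⟨q, hq⟩ : ∃ q, ((1 + γ) * μ - γ) * q = μ ^ 2 := ⟨_, mul_div_cancel₀ _ hc⟩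
    have hz : (1 - q) ∈ spectrum ℂ K := by
      rw [← Matrix.spectrum_toLin', ← Module.End.hasEigenvalue_iff_mem_spectrum]
      refine Module.End.hasEigenvalue_of_hasEigenvector (x := y)
        ⟨Module.End.mem_eigenspace_iff.mpr ?_, hy0⟩
      funext i
      have := congrFun hy i
      simp at this
      simp
      apply mul_left_cancel₀ hc
      linear_combination -this + y i * hq
    obtain ⟨r, hr, r0, r1⟩ := real_eig C hC hCeig _ hz
    refine scalar_aux (1 - r) γ μ (by linarith) (by linarith) hγ.1 hγ.2 ?_
    push_cast
    rw [← hr]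
    linear_combination -hq
end

section
/- Let H be a real symmetric positive semidefinite n×n matrix, ρ > 0, Z = H + ρI, let F be a real m×n matrix with full row rank m (m ≤ n), and let M11 denote the top-left n×n block of the inverse of the KKT matrix K = [[Z, Fᵀ], [F, 0]]. Then M11 is symmetric positive semidefinite and its spectral norm satisfies ‖M11‖ ≤ ‖Z⁻¹‖. -/
open scoped Matrix in

/-- With `Z = H + ρI`, `F` of full row rank, and `M11` the top-left block of
the inverse of the KKT matrix `[[Z, Fᵀ], [F, 0]]`, the matrix `M11` is symmetric positive
semidefinite and its spectral (operator) norm satisfies `‖M11‖ ≤ ‖Z⁻¹‖`.  The spectral norm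
is expressed via `Matrix.toEuclideanCLM`, the action of a matrix as a continuous linear map
on Euclidean space. -/
theorem kkt_M11_psd_and_norm_bound {n m : ℕ} (H : Matrix (Fin n) (Fin n) ℝ)
    (hH : H.PosSemidef) (ρ : ℝ) (hρ : 0 < ρ)
    (F : Matrix (Fin m) (Fin n) ℝ) (hmn : m ≤ n) (hF : F.rank = m)
    (Z : Matrix (Fin n) (Fin n) ℝ)
    (hZdef : Z = H + ρ • (1 : Matrix (Fin n) (Fin n) ℝ))
    (M11 : Matrix (Fin n) (Fin n) ℝ)
    (hM11 : M11 = ((Matrix.fromBlocks Z F.transpose F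
      (0 : Matrix (Fin m) (Fin m) ℝ))⁻¹).toBlocks₁₁) :
    M11.PosSemidef ∧
      ‖Matrix.toEuclideanCLM (𝕜 := ℝ) M11‖ ≤ ‖Matrix.toEuclideanCLM (𝕜 := ℝ) Z⁻¹‖ := by
  have hZ : Z.PosDef := by
    rw [hZdef]
    exact Matrix.PosDef.posSemidef_add hH (Matrix.PosDef.one.smul hρ)
  have hP : (Z⁻¹).PosDef := hZ.inv
  have hZu : IsUnit Z.det := (Matrix.isUnit_iff_isUnit_det _).1 hZ.isUnit
  have hPZ : Z⁻¹ * Z = 1 := Matrix.nonsing_inv_mul _ hZu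
  have hZP : Z * Z⁻¹ = 1 := Matrix.mul_nonsing_inv _ hZu
  have hPs : (Z⁻¹)ᵀ = Z⁻¹ := by simpa using hP.isHermitian.eq
  have hZs : Zᵀ = Z := by simpa using hZ.isHermitian.eq
  generalize hPdef : Z⁻¹ = P at *
  have hinj : Function.Injective F.vecMul := by
    rw [Matrix.vecMul_injective_iff, linearIndependent_iff_card_eq_finrank_span, Set.finrank,
      ← Matrix.rank_eq_finrank_span_row]
    simp [hF]
  have hS : (F * P * Fᵀ).PosDef := by
    have := hP.mul_mul_conjTranspose_same hinj
    simpa using this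
  have hSu : IsUnit (F * P * Fᵀ).det := (Matrix.isUnit_iff_isUnit_det _).1 hS.isUnit
  have hQ : ((F * P * Fᵀ)⁻¹).PosDef := hS.inv
  have hSQ := Matrix.mul_nonsing_inv _ hSu
  have hQS := Matrix.nonsing_inv_mul _ hSu
  have hQs : ((F * P * Fᵀ)⁻¹)ᵀ = (F * P * Fᵀ)⁻¹ := by simpa using hQ.isHermitian.eq
  generalize (F * P * Fᵀ)⁻¹ = Q at *
  have hM : M11 = P - P * Fᵀ * Q * F * P := by
    rw [hM11, Matrix.inv_eq_right_inv (B := Matrix.fromBlocks (P - P * Fᵀ * Q * F * P)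
      (P * Fᵀ * Q) (Q * F * P) (-Q)), Matrix.toBlocks_fromBlocks₁₁]
    rw [Matrix.fromBlocks_multiply, ← Matrix.fromBlocks_one]
    have e1 : Z * (P - P * Fᵀ * Q * F * P) + Fᵀ * (Q * F * P) = 1 := by
      simp only [Matrix.mul_sub, ← Matrix.mul_assoc, hZP, Matrix.one_mul]
      simp
    have e2 : Z * (P * Fᵀ * Q) + Fᵀ * -Q = 0 := by
      simp only [← Matrix.mul_assoc, hZP, Matrix.one_mul, Matrix.mul_neg]
      simp
    have e3 : F * (P - P * Fᵀ * Q * F * P) + (0 : Matrix (Fin m) (Fin m) ℝ) * (Q * F * P) = 0 := by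
      simp only [Matrix.mul_sub, ← Matrix.mul_assoc, hSQ, Matrix.one_mul]
      simp
    have e4 : F * (P * Fᵀ * Q) + (0 : Matrix (Fin m) (Fin m) ℝ) * -Q = 1 := by
      simp only [← Matrix.mul_assoc, hSQ]
      simp
    rw [e1, e2, e3, e4]
  clear hM11
  have hMs : M11ᵀ = M11 := by
    rw [hM]
    simp [Matrix.transpose_mul, hPs, hQs, Matrix.mul_assoc]
  have hFM : F * M11 = 0 := by
    rw [hM]
    simp only [Matrix.mul_sub, ← Matrix.mul_assoc, hSQ, Matrix.one_mul, sub_self]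
  have hZM : Z * M11 = 1 - Fᵀ * Q * F * P := by
    rw [hM]
    simp only [Matrix.mul_sub, ← Matrix.mul_assoc, hZP, Matrix.one_mul]
  have hMF : M11 * Fᵀ = 0 := by
    have := congrArg Matrix.transpose hFM
    simpa [Matrix.transpose_mul, hMs] using this
  have hMZM : M11 * Z * M11 = M11 := by
    rw [Matrix.mul_assoc, hZM, Matrix.mul_sub]
    simp only [← Matrix.mul_assoc, hMF]
    simp
  refine ⟨?_, ?_⟩
  · have := hZ.posSemidef.conjTranspose_mul_mul_same M11
    simpa [hMs, hMZM] using this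
  refine ContinuousLinearMap.opNorm_le_bound _ (norm_nonneg _) fun x => ?_
  set T := Matrix.toEuclideanCLM (𝕜 := ℝ) (n := Fin n)
  set y := T M11 x with hy
  have hmul : ∀ A B v, T (A * B) v = T A (T B v) := fun A B v => by rw [map_mul]; rfl
  have hsym : ∀ (A : Matrix (Fin n) (Fin n) ℝ), Aᵀ = A → ∀ u v, inner ℝ (T A u) v = inner ℝ u (T A v) := by
    intro A hA u v
    have h1 : ContinuousLinearMap.adjoint (T A) = T A := by
      have := map_star T A
      rw [Matrix.star_eq_conjTranspose] at this
      simpa [hA, ContinuousLinearMap.star_eq_adjoint] using this.symm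
    rw [← ContinuousLinearMap.adjoint_inner_right, h1]
  have hpos : ∀ v, 0 ≤ inner ℝ v (T P v) := by
    intro v
    rw [Matrix.inner_toEuclideanCLM]
    simpa [dotProduct_comm] using hP.posSemidef.dotProduct_mulVec_nonneg v.ofLp
  have hPZy : T P (T Z y) = y := by rw [← hmul, hPZ, map_one]; rfl
  have hyZy : inner ℝ y (T Z y) = inner ℝ x y := by
    rw [hy, hsym _ hMs, ← hmul, ← hmul, hMZM]
  have h1 : inner ℝ x y ≤ ‖x‖ * ‖y‖ := real_inner_le_norm _ _
  have h2 : inner ℝ y (T P y) ≤ ‖T P‖ * ‖y‖ ^ 2 := by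
    have a := real_inner_le_norm y (T P y)
    have b := (T P).le_opNorm y
    nlinarith [norm_nonneg y]
  rcases (norm_nonneg (T P)).eq_or_lt with hc | hc
  · have : T P = 0 := norm_eq_zero.1 hc.symm
    rw [← hPZy, this]; simp
  have h3 := hpos (y - ‖T P‖ • T Z y)
  have h4 : inner ℝ (T Z y) (T P y) = ‖y‖ ^ 2 := by
    rw [← hsym _ hPs, hPZy, real_inner_self_eq_norm_sq]
  have h5 : inner ℝ (T Z y) y = inner ℝ x y := by rw [hsym _ hZs, hyZy]
  simp only [map_sub, map_smul, hPZy, inner_sub_left, inner_sub_right, real_inner_smul_left,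
    real_inner_smul_right, h4, h5, real_inner_self_eq_norm_sq] at h3
  have h6 : ‖T P‖ * ‖y‖ ^ 2 ≤ ‖T P‖ * (‖T P‖ * (‖x‖ * ‖y‖)) := by
    nlinarith [mul_le_mul_of_nonneg_left h1 (mul_pos hc hc).le]
  have h7 := le_of_mul_le_mul_left h6 hc
  rcases (norm_nonneg y).eq_or_lt with hy0 | hy0
  · rw [← hy0]; positivity
  · nlinarith
end

section
/- Let H be a real symmetric positive semidefinite n×n matrix, ρ > 0, Z = H + ρI, let F be a real m×n matrix with full row rank m (m ≤ n), and let M11 denote the top-left n×n block of the inverse of the KKT matrix K = [[Z, Fᵀ], [F, 0]]. If the kernels of H and F intersect only at the origin (ker H ∩ ker F = {0}), then ρ·‖M11‖ < 1, i.e. every eigenvalue λ of the symmetric positive semidefinite matrix M11 satisfies ρ·λ < 1. -/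
open Matrix in
/-- Strict contraction in coordinates. -/
lemma kkt_aux_dot {n m : ℕ} (H : Matrix (Fin n) (Fin n) ℝ)
    (hH : H.PosSemidef) (ρ : ℝ) (hρ : 0 < ρ)
    (F : Matrix (Fin m) (Fin n) ℝ)
    (hker : LinearMap.ker H.mulVecLin ⊓ LinearMap.ker F.mulVecLin = ⊥)
    (Z : Matrix (Fin n) (Fin n) ℝ)
    (hZdef : Z = H + ρ • (1 : Matrix (Fin n) (Fin n) ℝ))
    (M11 : Matrix (Fin n) (Fin n) ℝ)
    (hM11 : M11 = ((Matrix.fromBlocks Z F.transpose F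
      (0 : Matrix (Fin m) (Fin m) ℝ))⁻¹).toBlocks₁₁)
    (v : Fin n → ℝ) (hv : v ≠ 0) :
    ρ ^ 2 * ((M11 *ᵥ v) ⬝ᵥ (M11 *ᵥ v)) < v ⬝ᵥ v := by
  have hvv : 0 < v ⬝ᵥ v := by
    have h0 : 0 ≤ v ⬝ᵥ v := Finset.sum_nonneg fun i _ => mul_self_nonneg _
    exact lt_of_le_of_ne h0 fun h => hv (dotProduct_self_eq_zero.1 h.symm)
  by_cases hdet : IsUnit (Matrix.fromBlocks Z F.transpose F (0 : Matrix (Fin m) (Fin m) ℝ)).det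
  swap
  · rw [Matrix.nonsing_inv_apply_not_isUnit _ hdet] at hM11
    have : M11 = 0 := by rw [hM11]; ext i j; rfl
    simpa [this] using hvv
  have hmul := Matrix.mul_nonsing_inv _ hdet
  set B := (Matrix.fromBlocks Z F.transpose F (0 : Matrix (Fin m) (Fin m) ℝ))⁻¹ with hB
  rw [← Matrix.fromBlocks_toBlocks B, Matrix.fromBlocks_multiply, ← Matrix.fromBlocks_one,
    Matrix.fromBlocks_inj, ← hM11] at hmul
  obtain ⟨h1, -, h3, -⟩ := hmul
  rw [Matrix.zero_mul, add_zero] at h3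
  set x := M11 *ᵥ v with hx
  set y := B.toBlocks₂₁ *ᵥ v with hy
  have e1 : H *ᵥ x + ρ • x + Fᵀ *ᵥ y = v := by
    have := congrArg (fun A => A *ᵥ v) h1
    simpa [Matrix.add_mulVec, ← Matrix.mulVec_mulVec, hZdef, Matrix.smul_mulVec] using this
  have e2 : F *ᵥ x = 0 := by
    have := congrArg (fun A => A *ᵥ v) h3
    simpa [← Matrix.mulVec_mulVec] using this
  have e3 : x ⬝ᵥ v = x ⬝ᵥ (H *ᵥ x) + ρ * (x ⬝ᵥ x) := by
    have h : x ⬝ᵥ (Fᵀ *ᵥ y) = 0 := by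
      rw [Matrix.dotProduct_mulVec, Matrix.vecMul_transpose, e2, zero_dotProduct]
    conv_lhs => rw [← e1]
    rw [dotProduct_add, dotProduct_add, dotProduct_smul, h]
    simp
  have hq : 0 ≤ x ⬝ᵥ (H *ᵥ x) := by simpa using hH.dotProduct_mulVec_nonneg x
  have hs : 0 ≤ (v - ρ • x) ⬝ᵥ (v - ρ • x) := Finset.sum_nonneg fun i _ => mul_self_nonneg _
  have key : v ⬝ᵥ v - ρ ^ 2 * (x ⬝ᵥ x)
      = (v - ρ • x) ⬝ᵥ (v - ρ • x) + 2 * ρ * (x ⬝ᵥ (H *ᵥ x)) := by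
    simp only [sub_dotProduct, dotProduct_sub, smul_dotProduct, dotProduct_smul, smul_eq_mul,
      dotProduct_comm v x]
    linear_combination 2 * ρ * e3
  by_contra hcon
  have hρq : 0 ≤ 2 * ρ * (x ⬝ᵥ (H *ᵥ x)) := by positivity
  have z1 : (v - ρ • x) ⬝ᵥ (v - ρ • x) = 0 := by linarith
  have z2 : x ⬝ᵥ (H *ᵥ x) = 0 := by
    have : 2 * ρ * (x ⬝ᵥ (H *ᵥ x)) = 0 := by linarith
    exact (mul_eq_zero.1 this).resolve_left (by positivity)
  have z3 : H *ᵥ x = 0 := (hH.dotProduct_mulVec_zero_iff x).1 (by simpa using z2)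
  have z4 : x ∈ LinearMap.ker H.mulVecLin ⊓ LinearMap.ker F.mulVecLin := by
    simp [z3, e2]
  rw [hker, Submodule.mem_bot] at z4
  rw [z4, smul_zero, sub_zero] at z1
  exact hvv.ne' z1

/-- With `Z = H + ρI`, `F` of full row rank, and `M11` the top-left block of
the inverse of the KKT matrix `[[Z, Fᵀ], [F, 0]]`, if `ker H ∩ ker F = {0}` then
`ρ‖M11‖ < 1` (spectral norm), equivalently every eigenvalue `λ` of the positive
semidefinite matrix `M11` satisfies `ρλ < 1`. -/
theorem kkt_M11_strict_norm_bound {n m : ℕ} (H : Matrix (Fin n) (Fin n) ℝ)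
    (hH : H.PosSemidef) (ρ : ℝ) (hρ : 0 < ρ)
    (F : Matrix (Fin m) (Fin n) ℝ) (hmn : m ≤ n) (hF : F.rank = m)
    (hker : LinearMap.ker H.mulVecLin ⊓ LinearMap.ker F.mulVecLin = ⊥)
    (Z : Matrix (Fin n) (Fin n) ℝ)
    (hZdef : Z = H + ρ • (1 : Matrix (Fin n) (Fin n) ℝ))
    (M11 : Matrix (Fin n) (Fin n) ℝ)
    (hM11 : M11 = ((Matrix.fromBlocks Z F.transpose F
      (0 : Matrix (Fin m) (Fin m) ℝ))⁻¹).toBlocks₁₁) :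
    ρ * ‖Matrix.toEuclideanCLM (𝕜 := ℝ) M11‖ < 1 ∧
      ∀ lam ∈ spectrum ℝ M11, ρ * lam < 1 := by
  have hdot := kkt_aux_dot H hH ρ hρ F hker Z hZdef M11 hM11
  have hlt : ∀ v : EuclideanSpace ℝ (Fin n), v ≠ 0 →
      ρ * ‖Matrix.toEuclideanCLM (𝕜 := ℝ) M11 v‖ < ‖v‖ := by
    intro v hv
    have h := hdot v.ofLp (fun h => hv (by ext i; exact congrFun h i))
    refine lt_of_pow_lt_pow_left₀ 2 (norm_nonneg _) ?_
    rw [mul_pow, EuclideanSpace.real_norm_sq_eq, EuclideanSpace.real_norm_sq_eq]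
    simpa [dotProduct, sq] using h
  constructor
  · rcases (Metric.sphere (0 : EuclideanSpace ℝ (Fin n)) 1).eq_empty_or_nonempty with he | hne
    · have h0 : ‖Matrix.toEuclideanCLM (𝕜 := ℝ) M11‖ ≤ 0 := by
        refine ContinuousLinearMap.opNorm_le_of_unit_norm le_rfl fun x hx => ?_
        have : x ∈ Metric.sphere (0 : EuclideanSpace ℝ (Fin n)) 1 := by simpa using hx
        simp [he] at this
      nlinarith
    · obtain ⟨u, hu, hmax⟩ := (isCompact_sphere (0 : EuclideanSpace ℝ (Fin n)) 1).exists_isMaxOn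
        hne (f := fun x => ‖Matrix.toEuclideanCLM (𝕜 := ℝ) M11 x‖) (by fun_prop)
      have hu1 : ‖u‖ = 1 := by simpa using hu
      have h0 : ‖Matrix.toEuclideanCLM (𝕜 := ℝ) M11‖ ≤ ‖Matrix.toEuclideanCLM (𝕜 := ℝ) M11 u‖ := by
        refine ContinuousLinearMap.opNorm_le_of_unit_norm (norm_nonneg _) fun x hx => ?_
        exact hmax (by simpa using hx)
      have hu2 := hlt u (by rintro rfl; simp at hu1)
      rw [hu1] at hu2
      exact lt_of_le_of_lt (mul_le_mul_of_nonneg_left h0 hρ.le) hu2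
  · intro lam hlam
    rw [← Matrix.spectrum_toLin', ← Module.End.hasEigenvalue_iff_mem_spectrum] at hlam
    obtain ⟨v, hv⟩ := hlam.exists_hasEigenvector
    have h1 : Matrix.mulVec M11 v = lam • v := by simpa using hv.apply_eq_smul
    have h2 := hdot v hv.2
    rw [h1, smul_dotProduct, dotProduct_smul, smul_eq_mul, smul_eq_mul] at h2
    have h3 : 0 ≤ dotProduct v v := Finset.sum_nonneg fun i _ => mul_self_nonneg _
    by_contra hcon
    have h4 : 1 ≤ (ρ * lam) ^ 2 := one_le_pow₀ (not_lt.1 hcon)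
    nlinarith
end

section
/- Let H be a real symmetric positive semidefinite n×n matrix, ρ > 0, Z = H + ρI, let F be a real m×n matrix with full row rank m (m ≤ n), and let M11 denote the top-left n×n block of the inverse of the KKT matrix K = [[Z, Fᵀ], [F, 0]]. If ker H ∩ ker F = {0}, then the 2n×2n block matrix N = [[ρ·M11, −(M11 − (1/ρ)I)], [0, 0]] is Schur stable, i.e. its spectral radius is strictly less than one. -/
open Matrix ComplexOrder MatrixOrder in
lemma aux_posSemidef_map {n : ℕ} {H : Matrix (Fin n) (Fin n) ℝ} (hH : H.PosSemidef) :
    (H.map Complex.ofReal).PosSemidef := by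
  obtain ⟨B, hB⟩ := CStarAlgebra.nonneg_iff_eq_star_mul_self.mp hH.nonneg
  have : H.map Complex.ofReal = (B.map Complex.ofReal)ᴴ * (B.map Complex.ofReal) := by
    rw [hB]
    ext i j
    simp [Matrix.mul_apply]
  rw [this]
  exact Matrix.posSemidef_conjTranspose_mul_self _

open Matrix ComplexOrder in
lemma aux_re_im {n m : ℕ} (A : Matrix (Fin m) (Fin n) ℝ) (x : Fin n → ℂ)
    (h : A.map Complex.ofReal *ᵥ x = 0) :
    A *ᵥ (fun i => (x i).re) = 0 ∧ A *ᵥ (fun i => (x i).im) = 0 := by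
  constructor
  · ext i
    have := congrArg Complex.re (congrFun h i)
    simpa [Matrix.mulVec, dotProduct] using this
  · ext i
    have := congrArg Complex.im (congrFun h i)
    simpa [Matrix.mulVec, dotProduct] using this

open Matrix ComplexOrder in
lemma aux_kkt_isUnit {n m : ℕ} (H : Matrix (Fin n) (Fin n) ℝ)
    (hH : H.PosSemidef) (ρ : ℝ) (hρ : 0 < ρ)
    (F : Matrix (Fin m) (Fin n) ℝ) (hF : F.rank = m) :
    IsUnit (Matrix.fromBlocks (H + ρ • (1 : Matrix (Fin n) (Fin n) ℝ)) F.transpose F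
      (0 : Matrix (Fin m) (Fin m) ℝ)) := by
  have hFT : Function.Injective (Fᵀ.mulVec) := by
    rw [Matrix.mulVec_injective_iff]
    have : LinearIndependent ℝ F.row := by
      rw [linearIndependent_iff_card_eq_finrank_span, Set.finrank, ← Matrix.rank_eq_finrank_span_row, hF]
      simp
    exact this
  rw [← Matrix.mulVec_injective_iff_isUnit]
  have key : ∀ w, Matrix.mulVec (Matrix.fromBlocks (H + ρ • (1 : Matrix (Fin n) (Fin n) ℝ))
      F.transpose F (0 : Matrix (Fin m) (Fin m) ℝ)) w = 0 → w = 0 := by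
    intro w hw
    obtain ⟨x, y, rfl⟩ : ∃ x y, w = Sum.elim x y :=
      ⟨w ∘ Sum.inl, w ∘ Sum.inr, (Sum.elim_comp_inl_inr w).symm⟩
    rw [Matrix.fromBlocks_mulVec] at hw
    have h1 : (H + ρ • (1 : Matrix (Fin n) (Fin n) ℝ)) *ᵥ x + Fᵀ *ᵥ y = 0 := by
      ext i; simpa using congrFun hw (Sum.inl i)
    have h2 : F *ᵥ x = 0 := by
      ext i; simpa using congrFun hw (Sum.inr i)
    have h3 := congrArg (fun v => x ⬝ᵥ v) h1
    have h4 : x ⬝ᵥ Fᵀ *ᵥ y = 0 := by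
      rw [Matrix.dotProduct_mulVec, Matrix.vecMul_transpose, h2, zero_dotProduct]
    simp only [dotProduct_add, h4, add_mulVec, smul_mulVec, one_mulVec, dotProduct_smul,
      dotProduct_zero, smul_eq_mul] at h3
    have h5 : 0 ≤ x ⬝ᵥ H *ᵥ x := by simpa using hH.dotProduct_mulVec_nonneg x
    have h6 : 0 ≤ x ⬝ᵥ x := by simpa using dotProduct_star_self_nonneg x
    have h7 : x ⬝ᵥ x = 0 := by nlinarith
    have hx : x = 0 := dotProduct_self_eq_zero.mp h7
    subst hx
    have hy : y = 0 := hFT (by simpa using h1)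
    subst hy
    simp
  intro a b hab
  have := key (a - b) (by rw [Matrix.mulVec_sub]; exact sub_eq_zero.mpr hab)
  exact sub_eq_zero.mp this

open Matrix ComplexOrder in

/-- With `Z = H + ρI`, `F` of full row rank, `M11` the top-left block of
the inverse of the KKT matrix `[[Z, Fᵀ], [F, 0]]`, and `ker H ∩ ker F = {0}`, the block
matrix `N = [[ρ·M11, −(M11 − (1/ρ)I)], [0, 0]]` is Schur stable: every complex eigenvalue
of `N` has modulus strictly less than one. -/
theorem admm_error_matrix_schur_stable {n m : ℕ} (H : Matrix (Fin n) (Fin n) ℝ)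
    (hH : H.PosSemidef) (ρ : ℝ) (hρ : 0 < ρ)
    (F : Matrix (Fin m) (Fin n) ℝ) (hmn : m ≤ n) (hF : F.rank = m)
    (hker : LinearMap.ker H.mulVecLin ⊓ LinearMap.ker F.mulVecLin = ⊥)
    (Z : Matrix (Fin n) (Fin n) ℝ)
    (hZdef : Z = H + ρ • (1 : Matrix (Fin n) (Fin n) ℝ))
    (M11 : Matrix (Fin n) (Fin n) ℝ)
    (hM11 : M11 = ((Matrix.fromBlocks Z F.transpose F
      (0 : Matrix (Fin m) (Fin m) ℝ))⁻¹).toBlocks₁₁) :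
    ∀ μ ∈ spectrum ℂ
      ((Matrix.fromBlocks (ρ • M11)
          (-(M11 - ρ⁻¹ • (1 : Matrix (Fin n) (Fin n) ℝ)))
          (0 : Matrix (Fin n) (Fin n) ℝ)
          (0 : Matrix (Fin n) (Fin n) ℝ)).map Complex.ofReal),
      ‖μ‖ < 1 := by
  intro μ hμ
  have hK := aux_kkt_isUnit H hH ρ hρ F hF
  rw [← hZdef] at hK
  have hKK := Matrix.mul_nonsing_inv _ ((Matrix.isUnit_iff_isUnit_det _).mp hK)
  set Ki := (Matrix.fromBlocks Z F.transpose F (0 : Matrix (Fin m) (Fin m) ℝ))⁻¹ with hKi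
  rw [← Matrix.fromBlocks_toBlocks Ki, Matrix.fromBlocks_multiply, ← Matrix.fromBlocks_one,
    Matrix.fromBlocks_inj, ← hM11] at hKK
  obtain ⟨e1, -, e2, -⟩ := hKK
  rw [Matrix.zero_mul, add_zero] at e2
  set M21 := Ki.toBlocks₂₁
  by_cases hμ0 : μ = 0
  · simp [hμ0]
  rw [← Matrix.spectrum_toLin', ← Module.End.hasEigenvalue_iff_mem_spectrum] at hμ
  obtain ⟨w, hw⟩ := hμ.exists_hasEigenvector
  have hw0 := hw.2
  have hw1 := hw.apply_eq_smul
  rw [Matrix.toLin'_apply] at hw1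
  obtain ⟨u, v, rfl⟩ : ∃ x y, w = Sum.elim x y :=
    ⟨w ∘ Sum.inl, w ∘ Sum.inr, (Sum.elim_comp_inl_inr w).symm⟩
  rw [Matrix.fromBlocks_map, Matrix.fromBlocks_mulVec] at hw1
  have hv : v = 0 := by
    ext i
    have := congrFun hw1 (Sum.inr i)
    simpa [Matrix.map_zero, hμ0] using this
  subst hv
  have hu : u ≠ 0 := by
    rintro rfl
    exact hw0 (by simp)
  set x : Fin n → ℂ := M11.map Complex.ofReal *ᵥ u with hx
  set y : Fin m → ℂ := M21.map Complex.ofReal *ᵥ u with hy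
  have hxu : (ρ : ℂ) • x = μ • u := by
    ext i
    have := congrFun hw1 (Sum.inl i)
    simpa [hx, Matrix.mulVec, dotProduct, Finset.mul_sum, mul_assoc] using this
  have hZx : Z.map Complex.ofReal *ᵥ x + (F.map Complex.ofReal)ᵀ *ᵥ y = u := by
    have := congrArg (fun A : Matrix (Fin n) (Fin n) ℝ => A.map Complex.ofRealHom) e1
    simp only [Matrix.map_add _ (map_add Complex.ofRealHom), Matrix.map_mul] at this
    rw [Matrix.map_one _ (map_zero _) (map_one _)] at this
    have := congrArg (fun A => A *ᵥ u) this
    simp only [Matrix.add_mulVec, ← Matrix.mulVec_mulVec, Matrix.one_mulVec] at this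
    exact this
  have hFx : F.map Complex.ofReal *ᵥ x = 0 := by
    have := congrArg (fun A : Matrix (Fin m) (Fin n) ℝ => A.map Complex.ofRealHom) e2
    simp only [Matrix.map_mul] at this
    rw [Matrix.map_zero _ (map_zero _)] at this
    have := congrArg (fun A => A *ᵥ u) this
    simp only [← Matrix.mulVec_mulVec, Matrix.zero_mulVec] at this
    exact this
  have hx0 : x ≠ 0 := by
    intro h
    rw [h, smul_zero] at hxu
    exact (smul_ne_zero hμ0 hu) hxu.symm
  have hHC := aux_posSemidef_map hH
  have hHx : H.map Complex.ofReal *ᵥ x ≠ 0 := by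
    intro h
    obtain ⟨a1, a2⟩ := aux_re_im H x h
    obtain ⟨b1, b2⟩ := aux_re_im F x hFx
    have hk : ∀ z : Fin n → ℝ, H *ᵥ z = 0 → F *ᵥ z = 0 → z = 0 := by
      intro z h1 h2
      have : z ∈ LinearMap.ker H.mulVecLin ⊓ LinearMap.ker F.mulVecLin := by
        simp [h1, h2]
      rw [hker] at this
      simpa using this
    apply hx0
    ext i
    exact Complex.ext (congrFun (hk _ a1 b1) i) (congrFun (hk _ a2 b2) i)
  have hFy : star x ⬝ᵥ (F.map Complex.ofReal)ᵀ *ᵥ y = 0 := by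
    have : F.map Complex.ofReal *ᵥ star x = 0 := by
      ext i
      have := congrArg star (congrFun hFx i)
      simpa [Matrix.mulVec, dotProduct] using this
    rw [Matrix.dotProduct_mulVec, Matrix.vecMul_transpose, this, zero_dotProduct]
  have hZC : Z.map Complex.ofReal = H.map Complex.ofReal + (ρ : ℂ) • 1 := by
    rw [hZdef]
    ext i j
    by_cases hij : i = j <;> simp [Matrix.one_apply, hij]
  have q : star x ⬝ᵥ u = star x ⬝ᵥ H.map Complex.ofReal *ᵥ x + ρ * (star x ⬝ᵥ x) := by
    conv_lhs => rw [← hZx]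
    rw [dotProduct_add, hFy, add_zero, hZC, Matrix.add_mulVec, dotProduct_add, Matrix.smul_mulVec,
      Matrix.one_mulVec, dotProduct_smul, smul_eq_mul]
  have q2 : (ρ : ℂ) * (star x ⬝ᵥ x) = μ * (star x ⬝ᵥ u) := by
    have := congrArg (fun z => star x ⬝ᵥ z) hxu
    simpa [dotProduct_smul] using this
  have hs : 0 < star x ⬝ᵥ x := dotProduct_star_self_pos_iff.mpr hx0
  have hh : 0 < star x ⬝ᵥ H.map Complex.ofReal *ᵥ x :=
    lt_of_le_of_ne (hHC.dotProduct_mulVec_nonneg x)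
      (fun h => hHx ((hHC.dotProduct_mulVec_zero_iff x).mp h.symm))
  rw [q] at q2
  generalize star x ⬝ᵥ x = s at *
  generalize star x ⬝ᵥ H.map Complex.ofReal *ᵥ x = h at *
  obtain ⟨s, rfl⟩ : ∃ r : ℝ, s = r := ⟨s.re, Complex.ext rfl (Complex.lt_def.mp hs).2.symm⟩
  obtain ⟨h, rfl⟩ : ∃ r : ℝ, h = r := ⟨h.re, Complex.ext rfl (Complex.lt_def.mp hh).2.symm⟩
  have hs' : 0 < s := by exact_mod_cast hs
  have hh' : 0 < h := by exact_mod_cast hh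
  have q3 := congrArg norm q2
  rw [norm_mul, norm_mul, ← Complex.ofReal_mul, ← Complex.ofReal_add, Complex.norm_real,
    Complex.norm_real, Complex.norm_real, Real.norm_of_nonneg hρ.le, Real.norm_of_nonneg hs'.le,
    Real.norm_of_nonneg (by positivity)] at q3
  by_contra hc
  push Not at hc
  nlinarith [mul_pos hρ hs']
end

section
/- Let f(z) = ½·zᵀHz + zᵀq, where H is a real symmetric positive definite n×n matrix and q ∈ ℝⁿ, and let K ⊆ ℝⁿ be a nonempty closed convex set. Let μ > 0 be a lower bound on the smallest eigenvalue of H and L ≥ μ an upper bound on the largest eigenvalue of H, let κ = L/μ, and let β = (√L − √μ)/(√L + √μ). Given z₀ ∈ K and y₀ = z₀, define for i ≥ 0 the fast gradient method iterates t_i = y_i − (1/L)·(H·y_i + q), z_{i+1} = π_K(t_i), y_{i+1} = (1+β)·z_{i+1} − β·z_i, where π_K is the Euclidean projection onto K. Then, with f* = min_{z∈K} f(z), the iterates satisfy f(z_i) − f* ≤ min{ (1 − 1/√κ)^i , 4κ/(2√κ + i)² } · 2·( f(z₀) − f* ) for all i ≥ 0. -/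
open scoped RealInnerProductSpace

/-- The spectrum bounds give quadratic form bounds. -/
lemma fgm_lower {n : ℕ} (H : Matrix (Fin n) (Fin n) ℝ) (hH : H.PosDef) (m : ℝ)
    (hspec : ∀ lam ∈ spectrum ℝ H, m ≤ lam) (w : EuclideanSpace ℝ (Fin n)) :
    m * ‖w‖ ^ 2 ≤ ⟪w, Matrix.toEuclideanLin H w⟫ := by
  have h1 : (H - algebraMap ℝ _ m).PosSemidef := by
    rw [Matrix.posSemidef_iff_isHermitian_and_spectrum_nonneg]
    refine ⟨hH.isHermitian.sub ?_, ?_⟩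
    · rw [Matrix.IsHermitian, Algebra.algebraMap_eq_smul_one]; simp
    · rw [← spectrum.sub_singleton_eq]
      rintro x ⟨a, ha, b, hb, rfl⟩
      have := hspec a ha
      simp only [Set.mem_singleton_iff] at hb
      subst hb
      simpa using this
  have h2 := (Matrix.isPositive_toEuclideanLin_iff.mpr h1).2 w
  rw [Algebra.algebraMap_eq_smul_one] at h2
  have h3 : Matrix.toEuclideanLin (H - m • (1 : Matrix (Fin n) (Fin n) ℝ)) w
      = Matrix.toEuclideanLin H w - m • w := by
    rw [map_sub, map_smul]; simp
  rw [h3] at h2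
  simp only [inner_sub_left, real_inner_smul_left, real_inner_self_eq_norm_sq, RCLike.re_to_real] at h2
  rw [real_inner_comm]; linarith

lemma fgm_upper {n : ℕ} (H : Matrix (Fin n) (Fin n) ℝ) (hH : H.PosDef) (m : ℝ)
    (hspec : ∀ lam ∈ spectrum ℝ H, lam ≤ m) (w : EuclideanSpace ℝ (Fin n)) :
    ⟪w, Matrix.toEuclideanLin H w⟫ ≤ m * ‖w‖ ^ 2 := by
  have h1 : (algebraMap ℝ _ m - H).PosSemidef := by
    rw [Matrix.posSemidef_iff_isHermitian_and_spectrum_nonneg]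
    refine ⟨Matrix.IsHermitian.sub ?_ hH.isHermitian, ?_⟩
    · rw [Matrix.IsHermitian, Algebra.algebraMap_eq_smul_one]; simp
    · rw [← spectrum.singleton_sub_eq]
      rintro x ⟨b, hb, a, ha, rfl⟩
      have := hspec a ha
      simp only [Set.mem_singleton_iff] at hb
      subst hb
      simpa using this
  have h2 := (Matrix.isPositive_toEuclideanLin_iff.mpr h1).2 w
  rw [Algebra.algebraMap_eq_smul_one] at h2
  have h3 : Matrix.toEuclideanLin (m • (1 : Matrix (Fin n) (Fin n) ℝ) - H) w
      = m • w - Matrix.toEuclideanLin H w := by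
    rw [map_sub, map_smul]; simp
  rw [h3] at h2
  simp only [inner_sub_left, real_inner_smul_left, real_inner_self_eq_norm_sq, RCLike.re_to_real] at h2
  rw [real_inner_comm]; linarith

section
variable {E : Type*} [NormedAddCommGroup E] [InnerProductSpace ℝ E]

/-- Exact second order expansion of the quadratic. -/
lemma fgm_expand (A : E →ₗ[ℝ] E) (hA : A.IsSymmetric) (q : E) (f : E → ℝ)
    (hf : ∀ w, f w = (1 / 2) * ⟪w, A w⟫ + ⟪w, q⟫) (x y : E) :
    f x = f y + ⟪A y + q, x - y⟫ + (1 / 2) * ⟪x - y, A (x - y)⟫ := by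
  have h1 : ⟪A y, x⟫ = ⟪y, A x⟫ := hA y x
  have h2 : ⟪x, A y⟫ = ⟪y, A x⟫ := by rw [real_inner_comm, h1]
  have h3 : ⟪A y, y⟫ = ⟪y, A y⟫ := hA y y
  rw [hf, hf]
  simp only [map_sub, inner_sub_left, inner_sub_right, inner_add_left, h1, h2, h3,
    real_inner_comm x q, real_inner_comm y q]
  ring

/-- Variational inequality of the projection. -/
lemma fgm_proj (K : Set E) (hK : Convex ℝ K) (u p : E) (hp : p ∈ K)
    (h : ∀ v ∈ K, ‖u - p‖ ≤ ‖u - v‖) : ∀ w ∈ K, ⟪u - p, w - p⟫ ≤ 0 := by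
  rw [← norm_eq_iInf_iff_real_inner_le_zero hK hp]
  have : Nonempty K := ⟨⟨p, hp⟩⟩
  apply le_antisymm
  · exact le_ciInf fun v => h v v.2
  · exact ciInf_le ⟨0, by rintro _ ⟨w, rfl⟩; exact norm_nonneg _⟩ (⟨p, hp⟩ : K)

/-- Key inequality of the projected gradient step. -/
lemma fgm_key (A : E →ₗ[ℝ] E) (hA : A.IsSymmetric) (q : E) (f : E → ℝ)
    (hf : ∀ w, f w = (1 / 2) * ⟪w, A w⟫ + ⟪w, q⟫) (m L : ℝ) (hL : 0 < L)
    (hlo : ∀ w, m * ‖w‖ ^ 2 ≤ ⟪w, A w⟫) (hup : ∀ w, ⟪w, A w⟫ ≤ L * ‖w‖ ^ 2)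
    (x y p : E) (hp : ⟪y - (1 / L) • (A y + q) - p, x - p⟫ ≤ 0) :
    f p + L * ⟪y - p, x - y⟫ + L / 2 * ‖y - p‖ ^ 2 + m / 2 * ‖x - y‖ ^ 2 ≤ f x := by
  have e1 := fgm_expand A hA q f hf x y
  have e2 := fgm_expand A hA q f hf p y
  have b1 := hlo (x - y)
  have b2 := hup (p - y)
  rw [norm_sub_rev] at b2
  have e3 : y - (1 / L) • (A y + q) - p = (y - p) - (1 / L) • (A y + q) := by abel
  have e4 : x - p = (x - y) + (y - p) := by abel
  rw [e3, e4, inner_sub_left, real_inner_smul_left, inner_add_right, inner_add_right,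
    real_inner_self_eq_norm_sq] at hp
  have e5 : ⟪A y + q, p - y⟫ = - ⟪A y + q, y - p⟫ := by
    rw [← inner_neg_right, neg_sub]
  rw [e5] at e2
  have hp2 : L * ⟪y - p, x - y⟫ + L * ‖y - p‖ ^ 2
      ≤ ⟪A y + q, x - y⟫ + ⟪A y + q, y - p⟫ := by
    have := mul_le_mul_of_nonneg_left hp hL.le
    field_simp at this
    linarith
  linarith

/-- One-step contraction of the Lyapunov function. -/
lemma fgm_step (a b d : E) (s L fp fz fs : ℝ) (hs : 0 < s) (hs1 : s ≤ 1) (hL : 0 < L)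
    (h1 : fp + L * ⟪d, -b⟫ + L / 2 * ‖d‖ ^ 2 + (L * s ^ 2) / 2 * ‖b‖ ^ 2 ≤ fs)
    (h2 : fp + L * ⟪d, s • (b - a)⟫ + L / 2 * ‖d‖ ^ 2 ≤ fz) :
    fp - fs + (L * s ^ 2) / 2 * ‖(1 - s) • a + s • b - (1 / s) • d‖ ^ 2
      ≤ (1 - s) * (fz - fs + (L * s ^ 2) / 2 * ‖a‖ ^ 2) := by
  have h3 : 0 ≤ ‖a - b‖ ^ 2 := sq_nonneg _
  simp only [← real_inner_self_eq_norm_sq, inner_sub_left, inner_sub_right, inner_add_left,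
    inner_add_right, real_inner_smul_left, real_inner_smul_right, inner_neg_right,
    real_inner_comm a b, real_inner_comm a d, real_inner_comm b d] at *
  generalize ⟪a, a⟫ = aa at *
  generalize ⟪b, b⟫ = bb at *
  generalize ⟪d, d⟫ = dd at *
  generalize ⟪a, b⟫ = ab at *
  generalize ⟪a, d⟫ = ad at *
  generalize ⟪b, d⟫ = bd at *
  have k1 := mul_le_mul_of_nonneg_left h1 hs.le
  have k2 := mul_le_mul_of_nonneg_left h2 (sub_nonneg.mpr hs1)
  have k3 := mul_nonneg (mul_nonneg (mul_nonneg hL.le (pow_nonneg hs.le 3))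
    (sub_nonneg.mpr hs1)) h3
  obtain ⟨r, hr⟩ : ∃ r, r = 1 / s := ⟨_, rfl⟩
  have hsr : s * r = 1 := by rw [hr]; exact mul_one_div_cancel hs.ne'
  rw [← hr]
  have e : L * s ^ 2 / 2 *
        ((1 - s) * ((1 - s) * aa) + (1 - s) * (s * ab) - (1 - s) * (r * ad) +
            (s * ((1 - s) * ab) + s * (s * bb) - s * (r * bd)) -
          (r * ((1 - s) * ad) + r * (s * bd) - r * (r * dd)))
      = L / 2 * (s ^ 2 * (1 - s) ^ 2 * aa + 2 * s ^ 3 * (1 - s) * ab - 2 * s * (1 - s) * ad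
          + s ^ 4 * bb - 2 * s ^ 2 * bd + dd) := by
    linear_combination (L / 2) * (-2 * s * (1 - s) * ad - 2 * s ^ 2 * bd + (s * r + 1) * dd) * hsr
  rw [e]
  linarith
end

/-- Scalar comparison of the two rates. -/
lemma fgm_rate (k : ℝ) (hk : 1 ≤ Real.sqrt k) (i : ℕ) :
    (1 - 1 / Real.sqrt k) ^ i ≤ 4 * k / (2 * Real.sqrt k + i) ^ 2 := by
  have hk0 : 0 ≤ k := by
    by_contra h
    rw [Real.sqrt_eq_zero_of_nonpos (by linarith)] at hk
    linarith
  have e : 4 * k = 4 * Real.sqrt k ^ 2 := by rw [Real.sq_sqrt hk0]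
  rw [e]
  generalize Real.sqrt k = r at *
  have hr : 0 < r := by linarith
  have hi : (0 : ℝ) ≤ i := Nat.cast_nonneg i
  have h0 : 0 ≤ 1 - 1 / r := by
    rw [sub_nonneg, div_le_one hr]; exact hk
  have h1 : (1 - 1 / r) ^ i ≤ Real.exp (-(i / r)) := by
    calc (1 - 1 / r) ^ i ≤ (Real.exp (-(1 / r))) ^ i :=
          pow_le_pow_left₀ h0 (Real.one_sub_le_exp_neg _) i
      _ = Real.exp (-(i / r)) := by rw [← Real.exp_nat_mul]; congr 1; ring
  have h2 : (1 + i / (2 * r)) ^ 2 ≤ Real.exp (i / r) := by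
    have : 1 + i / (2 * r) ≤ Real.exp (i / (2 * r)) := by
      linarith [Real.add_one_le_exp ((i : ℝ) / (2 * r))]
    calc (1 + i / (2 * r)) ^ 2 ≤ (Real.exp (i / (2 * r))) ^ 2 :=
          pow_le_pow_left₀ (by positivity) this 2
      _ = Real.exp (i / r) := by
          rw [← Real.exp_nat_mul]; congr 1; push_cast; field_simp
  have h3 : 4 * r ^ 2 / (2 * r + i) ^ 2 = ((1 + i / (2 * r)) ^ 2)⁻¹ := by
    field_simp; ring
  rw [h3]
  refine h1.trans ?_
  rw [Real.exp_neg]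
  exact inv_anti₀ (by positivity) h2

/-- Convergence of the fast gradient method (constant step scheme II) for
minimizing the strongly convex quadratic `f(z) = ½ zᵀHz + zᵀq` over a nonempty closed
convex set `K ⊆ ℝⁿ`: with `0 < μ ≤ λ_min(H)`, `λ_max(H) ≤ L`, `κ = L/μ`,
`β = (√L − √μ)/(√L + √μ)`, projection `π_K` (the Euclidean projection onto `K`), iterates
`t_i = y_i − (1/L)(H y_i + q)`, `z_{i+1} = π_K(t_i)`, `y_{i+1} = (1+β) z_{i+1} − β z_i`
started at `z₀ ∈ K`, `y₀ = z₀`, and `f* = min_{z ∈ K} f(z)`, one has for all `i`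
`f(z_i) − f* ≤ min{(1 − 1/√κ)^i, 4κ/(2√κ + i)²} · 2 (f(z₀) − f*)`. -/
theorem fast_gradient_method_convergence {n : ℕ}
    (H : Matrix (Fin n) (Fin n) ℝ) (hH : H.PosDef)
    (q : EuclideanSpace ℝ (Fin n)) (K : Set (EuclideanSpace ℝ (Fin n)))
    (hKne : K.Nonempty) (hKclosed : IsClosed K) (hKconvex : Convex ℝ K)
    (μ L : ℝ) (hμ : 0 < μ) (hμL : μ ≤ L)
    (hspec : ∀ lam ∈ spectrum ℝ H, μ ≤ lam ∧ lam ≤ L)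
    (κ β : ℝ) (hκ : κ = L / μ)
    (hβ : β = (Real.sqrt L - Real.sqrt μ) / (Real.sqrt L + Real.sqrt μ))
    (f : EuclideanSpace ℝ (Fin n) → ℝ)
    (hfdef : ∀ w, f w = (1 / 2) * ⟪w, Matrix.toEuclideanLin H w⟫ + ⟪w, q⟫)
    (proj : EuclideanSpace ℝ (Fin n) → EuclideanSpace ℝ (Fin n))
    (hproj : ∀ w, proj w ∈ K ∧ ∀ v ∈ K, ‖w - proj w‖ ≤ ‖w - v‖)
    (fstar : ℝ) (hfstar : IsLeast (f '' K) fstar)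
    (z y t : ℕ → EuclideanSpace ℝ (Fin n))
    (hz0 : z 0 ∈ K) (hy0 : y 0 = z 0)
    (ht : ∀ i, t i = y i - (1 / L) • (Matrix.toEuclideanLin H (y i) + q))
    (hz : ∀ i, z (i + 1) = proj (t i))
    (hy : ∀ i, y (i + 1) = (1 + β) • z (i + 1) - β • z i) :
    ∀ i : ℕ, f (z i) - fstar ≤
      min ((1 - 1 / Real.sqrt κ) ^ i) (4 * κ / (2 * Real.sqrt κ + i) ^ 2) *
        (2 * (f (z 0) - fstar)) := by
  have hL : 0 < L := lt_of_lt_of_le hμ hμL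
  have hA : (Matrix.toEuclideanLin H).IsSymmetric :=
    Matrix.isSymmetric_toEuclideanLin_iff.mpr hH.isHermitian
  have hlo := fgm_lower H hH μ (fun l hl => (hspec l hl).1)
  have hup := fgm_upper H hH L (fun l hl => (hspec l hl).2)
  have key : ∀ x ∈ K, ∀ w, f (proj (w - (1 / L) • (Matrix.toEuclideanLin H w + q)))
      + L * ⟪w - proj (w - (1 / L) • (Matrix.toEuclideanLin H w + q)), x - w⟫
      + L / 2 * ‖w - proj (w - (1 / L) • (Matrix.toEuclideanLin H w + q))‖ ^ 2
      + μ / 2 * ‖x - w‖ ^ 2 ≤ f x := fun x hx w =>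
    fgm_key _ hA q f hfdef μ L hL hlo hup x w _
      (fgm_proj K hKconvex _ _ (hproj _).1 (hproj _).2 x hx)
  obtain ⟨⟨xs, hxs, hfx⟩, hmin⟩ := hfstar
  have hmin' : ∀ x ∈ K, fstar ≤ f x := fun x hx => hmin ⟨x, hx, rfl⟩
  -- strong convexity at the minimiser
  have hsc : ∀ x ∈ K, μ / 2 * ‖x - xs‖ ^ 2 ≤ f x - fstar := by
    intro x hx
    have k1 := key xs hxs xs
    have k2 := key x hx xs
    have k3 := hmin' _ (hproj (xs - (1 / L) • (Matrix.toEuclideanLin H xs + q))).1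
    generalize proj (xs - (1 / L) • (Matrix.toEuclideanLin H xs + q)) = p at *
    simp only [sub_self, inner_zero_right, norm_zero, hfx] at k1
    have hd : ‖xs - p‖ ^ 2 ≤ 0 := by
      by_contra hcon
      push Not at hcon
      have := mul_pos hL hcon
      nlinarith
    have hd0 : xs - p = 0 := by
      rw [← norm_eq_zero]
      exact pow_eq_zero_iff (two_ne_zero) |>.mp (le_antisymm hd (sq_nonneg _))
    rw [hd0] at k2
    simp only [inner_zero_left, norm_zero] at k2
    linarith
  -- the parameter s = sqrt (μ / L)
  obtain ⟨s, hs⟩ : ∃ s, s = Real.sqrt μ / Real.sqrt L := ⟨_, rfl⟩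
  have hsL : 0 < Real.sqrt L := Real.sqrt_pos.mpr hL
  have hsμ : 0 < Real.sqrt μ := Real.sqrt_pos.mpr hμ
  have hs0 : 0 < s := by rw [hs]; positivity
  have hs1 : s ≤ 1 := by rw [hs, div_le_one hsL]; exact Real.sqrt_le_sqrt hμL
  have hμs : μ = L * s ^ 2 := by
    rw [hs, div_pow, Real.sq_sqrt hμ.le, Real.sq_sqrt hL.le]; field_simp
  have hβs : (1 + s) * β = 1 - s := by
    rw [hβ, hs]; field_simp
  have hκs : 1 / Real.sqrt κ = s := by
    rw [hκ, Real.sqrt_div hL.le, hs, one_div_div]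
  have hκ1 : 1 ≤ Real.sqrt κ := by
    rw [hκ, Real.sqrt_div hL.le, le_div_iff₀ hsμ, one_mul]; exact Real.sqrt_le_sqrt hμL
  have hzK : ∀ i, z i ∈ K := by
    intro i
    cases i with
    | zero => exact hz0
    | succ i => rw [hz]; exact (hproj _).1
  -- auxiliary sequence
  obtain ⟨v, hv⟩ : ∃ v : ℕ → EuclideanSpace ℝ (Fin n),
      ∀ i, v i = (1 / s) • ((1 + s) • y i - z i) := ⟨_, fun _ => rfl⟩
  have hzv : ∀ i, z i = (1 + s) • y i - s • v i := by
    intro i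
    rw [hv, smul_smul, mul_one_div_cancel hs0.ne', one_smul]; abel
  have hv1 : ∀ i, v (i + 1) = (1 - s) • v i + s • y i - (1 / s) • (y i - z (i + 1)) := by
    intro i
    have e1 : (1 + s) • y (i + 1) = (2 : ℝ) • z (i + 1) - (1 - s) • z i := by
      rw [hy, smul_sub, smul_smul, smul_smul, hβs]
      congr 2
      linear_combination hβs
    rw [hv, e1]
    have hss : s⁻¹ * s = 1 := inv_mul_cancel₀ hs0.ne'
    have e2 := hzv i
    rw [e2]
    generalize z (i + 1) = p
    match_scalars <;> field_simp <;> ring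
  have hstep : ∀ i, f (z (i + 1)) - fstar + μ / 2 * ‖v (i + 1) - xs‖ ^ 2
      ≤ (1 - s) * (f (z i) - fstar + μ / 2 * ‖v i - xs‖ ^ 2) := by
    intro i
    have k1 := key xs hxs (y i)
    have k2 := key (z i) (hzK i) (y i)
    rw [← ht, ← hz] at k1 k2
    have e1 : xs - y i = -(y i - xs) := by abel
    have e2 : z i - y i = s • ((y i - xs) - (v i - xs)) := by
      rw [hzv i]; module
    have e3 : v (i + 1) - xs = (1 - s) • (v i - xs) + s • (y i - xs)
        - (1 / s) • (y i - z (i + 1)) := by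
      rw [hv1 i]; module
    have e4 : 0 ≤ μ / 2 * ‖z i - y i‖ ^ 2 := by positivity
    rw [e3, hμs]
    apply fgm_step _ _ _ s L _ _ _ hs0 hs1 hL
    · rw [e1, norm_neg, hfx, hμs] at k1
      exact k1
    · rw [← e2]; linarith
  have hv0 : v 0 = z 0 := by
    rw [hv, hy0, add_smul, one_smul, add_sub_cancel_left, smul_smul,
      one_div_mul_cancel hs0.ne', one_smul]
  have hE : ∀ i, f (z i) - fstar + μ / 2 * ‖v i - xs‖ ^ 2
      ≤ (1 - s) ^ i * (2 * (f (z 0) - fstar)) := by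
    intro i
    induction i with
    | zero =>
      have := hsc (z 0) hz0
      rw [hv0, pow_zero]; linarith
    | succ i ih =>
      refine (hstep i).trans ?_
      rw [pow_succ' (1 - s) i, mul_assoc]
      exact mul_le_mul_of_nonneg_left ih (by linarith)
  intro i
  rw [min_eq_left (fgm_rate κ hκ1 i), hκs]
  have h1 := hE i
  have h2 : 0 ≤ μ / 2 * ‖v i - xs‖ ^ 2 := by positivity
  linarith
end
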